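/- Let δ be the least ordinal with X_δ = X_{δ+1}. Then δ ≥ ω₁, the first uncountable ordinal. -/

import Mathlib

open Set Topology

noncomputable section

/-- A set is an `Fσ` set if it is a countable union of closed sets. -/
def IsFSigma {X : Type*} [TopologicalSpace X] (s : Set X) : Prop :=
  ∃ F : ℕ → Set X, (∀ n, IsClosed (F n)) ∧ s = ⋃ n, F n

/-- A topological space is an `F`-space if any two disjoint open `Fσ` subsets
have disjoint closures. -/
def IsFSpace (X : Type*) [TopologicalSpace X] : Prop :=
  ∀ s t : Set X, IsOpen s → IsOpen t → IsFSigma s → IsFSigma t → Disjoint s t →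
    Disjoint (closure s) (closure t)

/-- `𝐒 = ℕ × [0,1]²` where `ℕ` is discrete and `[0,1]` is the unit interval. -/
abbrev bS : Type := ℕ × (unitInterval × unitInterval)

/-- `βπ : β𝐒 → βℕ`, the Stone–Čech extension of the projection `π(n,x,y) = n`. -/
def betaPi : StoneCech bS → StoneCech ℕ :=
  stoneCechExtend (continuous_stoneCechUnit.comp continuous_fst)

/-- `βf : β𝐒 → [0,1]`, the Stone–Čech extension of `f(n,x,y) = x`. -/
def betaF : StoneCech bS → unitInterval :=
  stoneCechExtend (continuous_fst.comp continuous_snd)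

/-- `S_u = βπ⁻¹(u)`, as a subset of `β𝐒` (carrying the subspace topology). -/
def Su (u : StoneCech ℕ) : Set (StoneCech bS) := betaPi ⁻¹' {u}

/-- `f_u : S_u → [0,1]`, the restriction of `βf` to `S_u`. -/
def fu (u : StoneCech ℕ) : (Su u) → unitInterval := fun z => betaF z.1

/-- `L_t = f_u⁻¹(t) ∩ cl_{S_u} f_u⁻¹([0,t))`. -/
def Lset (u : StoneCech ℕ) (t : unitInterval) : Set (Su u) :=
  fu u ⁻¹' {t} ∩ closure (fu u ⁻¹' (Set.Ico 0 t))

/-- `R_t = f_u⁻¹(t) ∩ cl_{S_u} f_u⁻¹((t,1])`. -/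
def Rset (u : StoneCech ℕ) (t : unitInterval) : Set (Su u) :=
  fu u ⁻¹' {t} ∩ closure (fu u ⁻¹' (Set.Ioc t 1))

/-- The rectangle `P_{s,r} = S_u ∩ cl_{β𝐒}(ℕ × [s,r] × I)`, viewed as a subset of `S_u`. -/
def Pset (u : StoneCech ℕ) (s r : unitInterval) : Set (Su u) :=
  Subtype.val ⁻¹' closure (stoneCechUnit '' {p : bS | p.2.1 ∈ Set.Icc s r})

/-- `L_{s,t} = cl_{S_u}(⋃_{s<r<t} P_{s,r})`. -/
def Lst (u : StoneCech ℕ) (s t : unitInterval) : Set (Su u) :=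
  closure (⋃ r ∈ Set.Ioo s t, Pset u s r)

/-- The interior of `B` in the subspace `A`, viewed as a subset of the ambient space. -/
def relInt {Y : Type*} [TopologicalSpace Y] (A B : Set Y) : Set Y :=
  Subtype.val '' interior ((Subtype.val : A → Y) ⁻¹' B)

/-- The transfinite sequence `X_α ⊆ S_u`: `X_0 = S_u`,
`X_{α+1} = X_α \ ⋃_{t} Int_{X_α}(X_α ∩ f_u⁻¹(t))`, and `X_λ = ⋂_{β<λ} X_β` at limits. -/
def Xseq (u : StoneCech ℕ) : Ordinal → Set (Su u) := fun α =>
  Ordinal.limitRecOn α Set.univ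
    (fun _ Xa => Xa \ ⋃ t : unitInterval, relInt Xa (Xa ∩ fu u ⁻¹' {t}))
    (fun o _ ih => ⋂ (β : {β : Ordinal // β < o}), ih β.1 β.2)

/-- The bottom line `B_u = S_u ∩ cl_{β𝐒}(ℕ × I × {0})`, viewed as a subset of `S_u`. -/
def Bu (u : StoneCech ℕ) : Set (Su u) :=
  Subtype.val ⁻¹' closure (stoneCechUnit '' {p : bS | p.2.2 = 0})

/-- The top line `T_u = S_u ∩ cl_{β𝐒}(ℕ × I × {1})`, viewed as a subset of `S_u`. -/
def Tu (u : StoneCech ℕ) : Set (Su u) :=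
  Subtype.val ⁻¹' closure (stoneCechUnit '' {p : bS | p.2.2 = 1})

theorem aux_pos {X : Type*} [TopologicalSpace X] [NormalSpace X] (C : Set X) (hC : IsClosed C)
    (A : ℕ → Set X) (hA : ∀ n, IsClosed (A n)) (hd : ∀ n, Disjoint C (A n)) :
    ∃ a : X → ℝ, Continuous a ∧ (∀ x ∈ C, a x = 0) ∧ ∀ n, ∀ x ∈ A n, 0 < a x := by
  choose g g0 g1 g2 using fun n => exists_continuous_zero_one_of_isClosed hC (hA n) (hd n)
  have hb : ∀ n x, ‖(1/2 : ℝ)^n * g n x‖ ≤ (1/2 : ℝ)^n := by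
    intro n x
    have h := g2 n x
    rw [Real.norm_of_nonneg (mul_nonneg (by positivity) h.1)]
    exact mul_le_of_le_one_right (by positivity) h.2
  refine ⟨fun x => ∑' n, (1/2 : ℝ)^n * g n x,
    continuous_tsum (fun n => by fun_prop) summable_geometric_two hb, ?_, ?_⟩
  · intro x hx
    have : ∀ n, (1/2 : ℝ)^n * g n x = 0 := fun n => by simp [g0 n hx]
    simp only [this, tsum_zero]
  · intro n x hx
    have hs : Summable fun n => (1/2 : ℝ)^n * g n x :=
      Summable.of_norm_bounded summable_geometric_two (fun n => hb n x)
    refine hs.tsum_pos (fun m => mul_nonneg (by positivity) (g2 m x).1) n ?_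
    rw [g1 n hx]; simp

theorem aux_fsigma {X : Type*} [TopologicalSpace X] (a b : X → ℝ) (ha : Continuous a)
    (hb : Continuous b) : IsFSigma {x | a x < b x} := by
  refine ⟨fun n => {x | a x + 1 / ((n : ℝ) + 1) ≤ b x},
    fun n => isClosed_le (by fun_prop) hb, ?_⟩
  ext x
  simp only [mem_setOf_eq, mem_iUnion]
  constructor
  · intro h
    obtain ⟨n, hn⟩ := exists_nat_one_div_lt (sub_pos.2 h)
    exact ⟨n, by linarith⟩
  · rintro ⟨n, hn⟩
    have : 0 < 1 / ((n : ℝ) + 1) := by positivity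
    linarith

theorem aux_key {X : Type*} [TopologicalSpace X] [T1Space X] [NormalSpace X] (hF : IsFSpace X)
    (f : X → unitInterval) (hf : Continuous f) (K : Set X) (hK : IsClosed K) (z : ℕ → X)
    (hz : ∀ k, z k ∉ K) (t : unitInterval)
    (ht : Filter.Tendsto (fun k => f (z k)) Filter.atTop (𝓝 t)) (p : X)
    (hp : p ∈ closure (range z)) :
    ∃ O : Set X, IsOpen O ∧ p ∈ O ∧ ∀ x ∈ O, x ∈ K → f x = t := by
  have h1 : ∀ w ∈ closure (range z), w ∈ K → f w = t := by
    intro w hw hwK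
    by_contra hne
    obtain ⟨V, W, hV, hW, hwV, htW, hVW⟩ := t2_separation hne
    obtain ⟨N, hN⟩ := Filter.eventually_atTop.1 (ht.eventually (hW.mem_nhds htW))
    have h2 : w ∈ closure (f ⁻¹' V ∩ range z) := (hV.preimage hf).inter_closure ⟨hwV, hw⟩
    have h3 : f ⁻¹' V ∩ range z ⊆ z '' Set.Iio N := by
      rintro _ ⟨hx, k, rfl⟩
      refine ⟨k, ?_, rfl⟩
      by_contra hk
      exact Set.disjoint_left.1 hVW hx (hN k (not_lt.1 hk))
    have h4 : IsClosed (z '' Set.Iio N) := ((Set.finite_Iio N).image z).isClosed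
    obtain ⟨k, -, rfl⟩ := closure_minimal h3 h4 h2
    exact hz k hwK
  obtain ⟨a, ha, a0, a1⟩ := aux_pos K hK (fun n => {z n}) (fun n => isClosed_singleton)
    (fun n => by simpa using hz n)
  obtain ⟨b, hb, b0, b1⟩ := aux_pos (closure (range z)) isClosed_closure
    (fun n : ℕ => K ∩ {x | 1 / ((n : ℝ) + 1) ≤ dist (f x) t})
    (fun n => hK.inter (isClosed_le continuous_const (hf.dist continuous_const)))
    (by
      intro n
      rw [Set.disjoint_left]
      rintro x hx ⟨hxK, hx2⟩
      have : 0 < 1 / ((n : ℝ) + 1) := by positivity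
      rw [mem_setOf_eq, h1 x hx hxK, dist_self] at hx2
      linarith)
  have hd := hF {x | b x < a x} {x | a x < b x} (isOpen_lt hb ha) (isOpen_lt ha hb)
    (aux_fsigma _ _ hb ha) (aux_fsigma _ _ ha hb)
    (Set.disjoint_left.2 fun x hx hy => lt_asymm (show b x < a x from hx) hy)
  refine ⟨(closure {x | a x < b x})ᶜ, isClosed_closure.isOpen_compl, ?_, ?_⟩
  · refine Set.disjoint_left.1 hd (closure_mono ?_ hp)
    rintro _ ⟨k, rfl⟩
    rw [mem_setOf_eq, b0 _ (subset_closure ⟨k, rfl⟩)]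
    exact a1 k _ rfl
  · intro x hx hxK
    by_contra hne
    obtain ⟨n, hn⟩ := exists_nat_one_div_lt (dist_pos.2 hne)
    refine hx (subset_closure ?_)
    rw [mem_setOf_eq, a0 x hxK]
    exact b1 n x ⟨hxK, hn.le⟩

theorem mem_relInt_iff' {Y : Type*} [TopologicalSpace Y] (A B : Set Y) (x : Y) :
    x ∈ relInt A B ↔ x ∈ A ∧ ∃ O, IsOpen O ∧ x ∈ O ∧ ∀ y ∈ O, y ∈ A → y ∈ B := by
  unfold relInt
  constructor
  · rintro ⟨⟨y, hy⟩, h, rfl⟩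
    obtain ⟨t, ht, hto, hyt⟩ := mem_interior.1 h
    obtain ⟨O, hO, rfl⟩ := isOpen_induced_iff.1 hto
    exact ⟨hy, O, hO, hyt, fun w hw hwA => ht (show (⟨w, hwA⟩ : A) ∈ _ from hw)⟩
  · rintro ⟨hx, O, hO, hxO, h⟩
    exact ⟨⟨x, hx⟩, mem_interior.2 ⟨Subtype.val ⁻¹' O, fun w hw => h _ hw w.2,
      hO.preimage continuous_subtype_val, hxO⟩, rfl⟩

theorem Xseq_zero' (u : StoneCech ℕ) : Xseq u 0 = univ := by
  simp [Xseq]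

theorem Xseq_mem_succ (u : StoneCech ℕ) (α : Ordinal) (x : Su u) :
    x ∈ Xseq u (α + 1) ↔ x ∈ Xseq u α ∧
      ∀ O, IsOpen O → x ∈ O → ∃ y ∈ O, y ∈ Xseq u α ∧ fu u y ≠ fu u x := by
  have : Xseq u (α + 1) = Xseq u α \ ⋃ t : unitInterval,
      relInt (Xseq u α) (Xseq u α ∩ fu u ⁻¹' {t}) := by
    simp [Xseq]
  rw [this]
  simp only [mem_diff, mem_iUnion, mem_relInt_iff']
  constructor
  · rintro ⟨h1, h2⟩
    refine ⟨h1, fun O hO hx => ?_⟩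
    by_contra hc
    push Not at hc
    exact h2 ⟨fu u x, h1, O, hO, hx, fun y hy hyX => ⟨hyX, hc y hy hyX⟩⟩
  · rintro ⟨h1, h2⟩
    refine ⟨h1, ?_⟩
    rintro ⟨t, -, O, hO, hx, h⟩
    obtain ⟨y, hy, hyX, hne⟩ := h2 O hO hx
    exact hne (((h y hy hyX).2 : fu u y = t).trans ((h x hx h1).2 : fu u x = t).symm)

theorem Xseq_limit' (u : StoneCech ℕ) (o : Ordinal) (h : Order.IsSuccLimit o) (x : Su u) :
    x ∈ Xseq u o ↔ ∀ β < o, x ∈ Xseq u β := by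
  have : Xseq u o = ⋂ (β : {β : Ordinal // β < o}), Xseq u β.1 := by
    conv_lhs => unfold Xseq
    rw [Ordinal.limitRecOn_limit _ _ _ _ h]
    rfl
  rw [this]; simp

theorem Xseq_anti (u : StoneCech ℕ) (β α : Ordinal) (h : β ≤ α) : Xseq u α ⊆ Xseq u β := by
  induction α using Ordinal.limitRecOn with
  | zero => rw [nonpos_iff_eq_zero.1 h]
  | add_one o ih =>
    rcases h.eq_or_lt with rfl | h
    · rfl
    · exact fun x hx => ih (Order.lt_add_one_iff.1 h) ((Xseq_mem_succ u o x).1 hx).1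
  | limit o ho ih =>
    rcases h.eq_or_lt with rfl | h
    · rfl
    · exact fun x hx => (Xseq_limit' u o ho x).1 hx β h

theorem Xseq_closed (u : StoneCech ℕ) (α : Ordinal) : IsClosed (Xseq u α) := by
  induction α using Ordinal.limitRecOn with
  | zero => rw [Xseq_zero']; exact isClosed_univ
  | add_one o ih =>
    refine isClosed_of_closure_subset fun x hx => ?_
    rw [Xseq_mem_succ]
    have hxo : x ∈ Xseq u o := closure_minimal (Xseq_anti u o _ (Order.le_succ o)) ih hx
    refine ⟨hxo, fun O hO hxO => ?_⟩
    by_contra hc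
    push Not at hc
    obtain ⟨y, hyO, hy⟩ := mem_closure_iff.1 hx O hO hxO
    have hy' := (Xseq_mem_succ u o y).1 hy
    obtain ⟨w, hw, hwX, hne⟩ := hy'.2 O hO hyO
    exact hne ((hc w hw hwX).trans (hc y hyO hy'.1).symm)
  | limit o ho ih =>
    have : Xseq u o = ⋂ β, ⋂ (_ : β < o), Xseq u β := by
      ext x; simp [Xseq_limit' u o ho]
    rw [this]
    exact isClosed_iInter fun β => isClosed_iInter fun hβ => ih β hβ

theorem fu_cont (u : StoneCech ℕ) : Continuous (fu u) :=
  (continuous_stoneCechExtend _).comp continuous_subtype_val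

theorem Xseq_mem_of (u : StoneCech ℕ) (α : Ordinal) (x : Su u)
    (h : ∀ β < α, x ∈ closure (Xseq u β ∩ {y | fu u y ≠ fu u x})) : x ∈ Xseq u α := by
  have h' : ∀ β < α, x ∈ Xseq u β := fun β hβ =>
    closure_minimal inter_subset_left (Xseq_closed u β) (h β hβ)
  rcases Ordinal.zero_or_succ_or_isSuccLimit α with rfl | ⟨o, rfl⟩ | ho
  · rw [Xseq_zero']; trivial
  · have ho : o < o + 1 := Order.lt_succ o
    refine (Xseq_mem_succ u o x).2 ⟨h' o ho, fun O hO hx => ?_⟩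
    obtain ⟨y, hy, hy1, hy2⟩ := mem_closure_iff.1 (h o ho) O hO hx
    exact ⟨y, hy, hy1, hy2⟩
  · exact (Xseq_limit' u α ho x).2 h'

theorem base_case (u : StoneCech ℕ) (hu : ∀ n : ℕ, u ≠ stoneCechUnit n) (t : unitInterval) :
    ∃ x : Su u, fu u x = t ∧ ∃ O, IsOpen O ∧ x ∈ O ∧ ∀ y ∈ O, fu u y = t := by
  let g : bS → unitInterval := fun p =>
    Set.projIcc 0 1 zero_le_one ((p.1 : ℝ) * dist p.2.1 t)
  have hg : Continuous g := by
    refine continuous_projIcc.comp ?_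
    have : Continuous fun p : bS => (p.1 : ℝ) :=
      (continuous_of_discreteTopology (f := fun n : ℕ => (n : ℝ))).comp continuous_fst
    exact this.mul ((continuous_fst.comp continuous_snd).dist continuous_const)
  let ι : ℕ → StoneCech bS := fun n => stoneCechUnit ((n, (t, 0)) : bS)
  have hι : Continuous ι := continuous_of_discreteTopology
  let p := stoneCechExtend hι u
  have hp : p ∈ Su u := by
    have : betaPi ∘ stoneCechExtend hι = id := by
      refine stoneCech_hom_ext ((continuous_stoneCechExtend _).comp (continuous_stoneCechExtend _))
        continuous_id ?_
      ext n
      simp only [Function.comp, betaPi, id, stoneCechExtend_stoneCechUnit, ι]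
    exact congrFun this u
  have hgp : stoneCechExtend hg p = 0 := by
    have : stoneCechExtend hg ∘ stoneCechExtend hι = fun _ => 0 := by
      refine stoneCech_hom_ext ((continuous_stoneCechExtend _).comp (continuous_stoneCechExtend _))
        continuous_const ?_
      ext n
      simp [Function.comp, stoneCechExtend_stoneCechUnit, ι, g]
    exact congrFun this u
  have hmain : ∀ q ∈ Su u, stoneCechExtend hg q < 1 → betaF q = t := by
    intro q hq hq1
    by_contra hne
    obtain ⟨N, hN⟩ := exists_nat_one_div_lt (dist_pos.2 hne)
    have hFc : Continuous betaF := continuous_stoneCechExtend _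
    have hPc : Continuous betaPi := continuous_stoneCechExtend _
    have hopen : IsOpen ({q | stoneCechExtend hg q < 1} ∩ {q | 1 / ((N : ℝ) + 1) < dist (betaF q) t}
        ∩ betaPi ⁻¹' (stoneCechUnit '' Set.Iic N)ᶜ) := by
      refine ((isOpen_lt (continuous_stoneCechExtend _) continuous_const).inter
        (isOpen_lt continuous_const (hFc.dist continuous_const))).inter
        (IsOpen.preimage hPc (((Set.finite_Iic N).image _).isClosed.isOpen_compl))
    obtain ⟨⟨n, x, y⟩, ⟨h1, h2⟩, h3⟩ := denseRange_stoneCechUnit.exists_mem_open hopen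
      ⟨q, ⟨hq1, hN⟩, by
        rintro ⟨n, -, hn⟩
        exact hu n ((hn.trans hq).symm)⟩
    simp only [mem_setOf_eq, betaF, stoneCechExtend_stoneCechUnit, Function.comp] at h1 h2
    simp only [mem_preimage, betaPi, stoneCechExtend_stoneCechUnit, Function.comp] at h3
    have h4 : N < n := by
      by_contra hc
      exact h3 ⟨n, not_lt.1 hc, rfl⟩
    have h5 : (n : ℝ) * dist x t < 1 := by
      by_contra hc
      have : g (n, x, y) = 1 := Set.projIcc_of_right_le _ (not_lt.1 hc)
      exact absurd this h1.ne
    have h6 : ((N : ℝ) + 1) ≤ n := by exact_mod_cast h4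
    rw [div_lt_iff₀ (by positivity)] at h2
    nlinarith [dist_nonneg (x := x) (y := t)]
  refine ⟨⟨p, hp⟩, hmain p hp (by rw [hgp]; exact zero_lt_one),
    Subtype.val ⁻¹' {q | stoneCechExtend hg q < 1}, ?_, ?_, ?_⟩
  · exact (isOpen_lt (continuous_stoneCechExtend _) continuous_const).preimage
      continuous_subtype_val
  · show stoneCechExtend hg p < 1
    rw [hgp]; exact zero_lt_one
  · exact fun y hy => hmain y.1 y.2 hy

theorem main_step (u : StoneCech ℕ) (hu : ∀ n : ℕ, u ≠ stoneCechUnit n)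
    (hcomp : IsCompact (Su u)) (hFsp : IsFSpace (Su u)) (α : Ordinal)
    (hα : α < (Cardinal.aleph 1).ord) : ∀ t : unitInterval, 0 < t →
    ∃ x : Su u, fu u x = t ∧ x ∈ Xseq u α ∧ x ∉ Xseq u (α + 1) := by
  haveI : CompactSpace (Su u) := isCompact_iff_compactSpace.1 hcomp
  induction α using WellFoundedLT.induction with
  | ind α ih =>
  intro t ht
  rcases eq_or_ne α 0 with rfl | hα0
  · obtain ⟨x, hx, O, hO, hxO, h⟩ := base_case u hu t
    refine ⟨x, hx, by rw [Xseq_zero']; trivial, fun hc => ?_⟩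
    obtain ⟨y, hy, -, hne⟩ := ((Xseq_mem_succ u 0 x).1 hc).2 O hO hxO
    exact hne ((h y hy).trans hx.symm)
  have hpos : 0 < α := pos_iff_ne_zero.2 hα0
  have hcount : (Set.Iio α).Countable := by
    rw [← Cardinal.le_aleph0_iff_set_countable, Cardinal.mk_Iio_ordinal, Cardinal.lift_le_aleph0,
      ← Cardinal.lt_aleph_one_iff]
    exact Cardinal.lt_ord.1 hα
  obtain ⟨b, hb⟩ := hcount.exists_eq_range ⟨0, hpos⟩
  have hbα : ∀ n, b n < α := fun n => by
    have : b n ∈ Set.Iio α := hb ▸ ⟨n, rfl⟩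
    exact this
  let B : ℕ → Ordinal := fun k => (Finset.range (k + 1)).sup b
  have hBα : ∀ k, B k < α := fun k => (Finset.sup_lt_iff hpos).2 fun i _ => hbα i
  have hBm : ∀ β < α, ∃ N, ∀ k ≥ N, β ≤ B k := by
    intro β hβ
    obtain ⟨n, rfl⟩ : β ∈ range b := hb ▸ hβ
    exact ⟨n, fun k hk => Finset.le_sup (f := b) (by simp; omega)⟩
  have hseq : ∃ s : ℕ → unitInterval, (∀ k, 0 < s k ∧ s k < t) ∧
      Filter.Tendsto s Filter.atTop (𝓝 t) := by
    obtain ⟨s, -, hs, hst⟩ := exists_seq_strictMono_tendsto' ht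
    exact ⟨s, fun k => hs k, hst⟩
  obtain ⟨s, hs, hst⟩ := hseq
  choose z hzf hzX hzX' using fun k => ih (B k) (hBα k) ((hBα k).trans hα) (s k) (hs k).1
  have hft : Filter.Tendsto (fun k => fu u (z k)) Filter.atTop (𝓝 t) := by simpa [hzf] using hst
  obtain ⟨p, hp⟩ := exists_clusterPt_of_compactSpace (Filter.map z Filter.atTop)
  have hpc : ∀ N, p ∈ closure (z '' Set.Ici N) := fun N =>
    mem_closure_iff_clusterPt.2 (hp.mono (Filter.le_principal_iff.2
      (Filter.image_mem_map (Filter.Ici_mem_atTop N))))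
  have hfp : fu u p = t := by
    have h1 : ClusterPt (fu u p) (Filter.map (fu u) (Filter.map z Filter.atTop)) :=
      hp.map (fu_cont u).continuousAt Filter.tendsto_map
    have h2 : ClusterPt (fu u p) (𝓝 t) := h1.mono hft
    by_contra hne
    exact h2.neBot.ne (disjoint_iff.1 (disjoint_nhds_nhds.2 hne))
  refine ⟨p, hfp, ?_, ?_⟩
  · refine Xseq_mem_of u α p fun β hβ => ?_
    obtain ⟨N, hN⟩ := hBm β hβ
    refine closure_mono ?_ (hpc N)
    rintro _ ⟨k, hk, rfl⟩
    refine ⟨Xseq_anti u _ _ (hN k hk) (hzX k), ?_⟩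
    rw [mem_setOf_eq, hfp, hzf]
    exact (hs k).2.ne
  · intro hc
    obtain ⟨O, hO, hpO, h⟩ := aux_key hFsp (fu u) (fu_cont u) (Xseq u α) (Xseq_closed u α) z
      (fun k hk => hzX' k (Xseq_anti u _ _ (Order.add_one_le_of_lt (hBα k)) hk)) t hft p
      (closure_mono (image_subset_range _ _) (hpc 0))
    obtain ⟨y, hy, hyX, hne⟩ := ((Xseq_mem_succ u α p).1 hc).2 O hO hpO
    exact hne ((h y hy hyX).trans hfp.symm)

/-- The least ordinal `δ` with `X_δ = X_{δ+1}` satisfies `δ ≥ ω₁`. -/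
theorem omega1_le_delta (u : StoneCech ℕ)
    (hu : ∀ n : ℕ, u ≠ stoneCechUnit n)
    (hne : (Su u).Nonempty) (hcomp : IsCompact (Su u)) (hconn : IsConnected (Su u))
    (hFsp : IsFSpace (Su u))
    (hP : ∀ s r : unitInterval, s < r → IsConnected (Pset u s r))
    (δ : Ordinal) (hδ : Xseq u δ = Xseq u (δ + 1))
    (hmin : ∀ β < δ, Xseq u β ≠ Xseq u (β + 1)) :
    (Cardinal.aleph 1).ord ≤ δ := by
  by_contra hlt
  obtain ⟨x, -, hx, hx'⟩ := main_step u hu hcomp hFsp δ (not_le.1 hlt) 1 zero_lt_one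
  exact hx' (hδ ▸ hx)

end
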